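/- Let n ≥ 3, k ≥ 1, and let three robots have pairwise distinct ID bit-strings b₁, b₂, b₃ : Fin k → Bool and arbitrary chiralities s₁, s₂, s₃ : Bool. The robots execute Stage 1 on the dynamic ring ZMod n from arbitrary start nodes: rounds are grouped into consecutive phases where phase t consists of 2^t rounds (phase t occupies rounds 2^t − 1 through 2^{t+1} − 2), and in every round of phase t robot j attempts to move clockwise if xor s_j (b_j (t mod k)) = false and counterclockwise otherwise. Then for every adversary e : ℕ → Option (ZMod n), some two of the three robots meet within n + n·2^k rounds (they occupy the same node at some time t ≤ n + n·2^k, or cross the same edge in opposite directions in some round completed by time n + n·2^k). -/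

import Mathlib

/-- One round of movement on the dynamic ring `ZMod n`: a robot at node `p` attempting to
move clockwise (`dir = true`) moves to `p + 1` unless the adversary removed edge `p`;
attempting counterclockwise (`dir = false`) it moves to `p - 1` unless edge `p - 1` was
removed. -/
def ringStep (n : ℕ) (e : Option (ZMod n)) (dir : Bool) (p : ZMod n) : ZMod n :=
  if dir then (if e ≠ some p then p + 1 else p)
  else (if e ≠ some (p - 1) then p - 1 else p)

/-- Position of a robot with start node `v`, per-round attempted directions `d` and
adversary `e`. -/
def ringPos (n : ℕ) (e : ℕ → Option (ZMod n)) (d : ℕ → Bool) (v : ZMod n) : ℕ → ZMod n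
  | 0 => v
  | t + 1 => ringStep n (e t) (d t) (ringPos n e d v t)

/-- Two robots with position functions `p q` meet within `R` rounds: same node at some
time `t ≤ R`, or they cross the same edge in opposite directions in a round completed by
time `R`. -/
def meetsWithin (n R : ℕ) (p q : ℕ → ZMod n) : Prop :=
  (∃ t ≤ R, p t = q t) ∨
  (∃ t, t + 1 ≤ R ∧ p (t + 1) = q t ∧ q (t + 1) = p t ∧ p t ≠ q t)


/-- The phase containing round `r` in Stage 1: phase `t` consists of the `2^t` rounds
`2^t - 1, …, 2^(t+1) - 2`, so the phase of round `r` is `⌊log₂ (r + 1)⌋`. -/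
def stage1Phase (r : ℕ) : ℕ := Nat.log 2 (r + 1)

/-- Direction attempted in round `r` by a robot with ID bit-string `b : Fin k → Bool` and
chirality `s`: clockwise (`true`) iff `xor s (b (phase r mod k)) = false`. -/
def stage1Dir (k : ℕ) (hk : 0 < k) (b : Fin k → Bool) (s : Bool) (r : ℕ) : Bool :=
  !(xor s (b ⟨stage1Phase r % k, Nat.mod_lt _ hk⟩))

/-!
Consider two robots heading in opposite directions, the third robot lying strictly inside the arc
along which they approach each other. In each round the adversary can block at most one of the two,
because they are never about to use the same edge while the third robot separates them. So the arc
shrinks every round, and before its length, initially at most `n - 1`, drops below `2` one of the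
outer robots must meet the inner one, however the latter moves. If the third robot starts outside
the arc, it is itself an outer robot of another such arc with one of the two opposite robots.

Opposite directions are available: two of the three robots have the same chirality, and their IDs
differ in some bit `i`, so they oppose each other in every phase `t ≡ i` modulo `k`. One of these
has length `2 ^ t` with `n < 2 ^ t ≤ n * 2 ^ k`, which is long enough and starts early enough.
-/

section Meetings

variable {n : ℕ}

/-- Two robots moving in one round from `p` to `p'` and from `q` to `q'` meet in that round: they
end at the same node or swap their nodes. -/
def Encounter (p q p' q' : ZMod n) : Prop :=
  p' = q' ∨ (p' = q ∧ q' = p ∧ p ≠ q)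

/-- Stage 1 is over: some two of the three robots with position functions `p`, `q`, `r` meet
within `R` rounds. -/
def SomePairMeets (n R : ℕ) (p q r : ℕ → ZMod n) : Prop :=
  meetsWithin n R p q ∨ meetsWithin n R p r ∨ meetsWithin n R q r

variable {R R' t : ℕ} {p q r : ℕ → ZMod n}

lemma Encounter.meetsWithin (h : Encounter (p t) (q t) (p (t + 1)) (q (t + 1)))
    (ht : t + 1 ≤ R) : meetsWithin n R p q :=
  h.imp (fun same => ⟨t + 1, ht, same⟩) (fun swap => ⟨t, ht, swap⟩)

lemma meetsWithin.symm (h : meetsWithin n R p q) : meetsWithin n R q p :=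
  h.imp (fun ⟨t, ht, same⟩ => ⟨t, ht, same.symm⟩)
    (fun ⟨t, ht, hp, hq, hne⟩ => ⟨t, ht, hq, hp, hne.symm⟩)

lemma meetsWithin.mono (h : meetsWithin n R p q) (hR : R ≤ R') : meetsWithin n R' p q :=
  h.imp (fun ⟨t, ht, same⟩ => ⟨t, ht.trans hR, same⟩)
    (fun ⟨t, ht, swap⟩ => ⟨t, ht.trans hR, swap⟩)

lemma SomePairMeets.mono (h : SomePairMeets n R p q r) (hR : R ≤ R') : SomePairMeets n R' p q r :=
  h.imp (·.mono hR) (Or.imp (·.mono hR) (·.mono hR))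

lemma SomePairMeets.swap_left (h : SomePairMeets n R p q r) : SomePairMeets n R q p r := by
  rcases h with hpq | hpr | hqr
  exacts [.inl hpq.symm, .inr (.inr hpr), .inr (.inl hqr)]

lemma SomePairMeets.swap_right (h : SomePairMeets n R p q r) : SomePairMeets n R p r q := by
  rcases h with hpq | hpr | hqr
  exacts [.inr (.inl hpq), .inl hpr, .inr (.inr hqr.symm)]

lemma somePairMeets_of_not_pairwise_ne (ht : t ≤ R)
    (h : ¬ (p t ≠ q t ∧ p t ≠ r t ∧ q t ≠ r t)) : SomePairMeets n R p q r := by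
  by_contra hmeet
  exact h ⟨fun hpq => hmeet (.inl (.inl ⟨t, ht, hpq⟩)),
    fun hpr => hmeet (.inr (.inl (.inl ⟨t, ht, hpr⟩))),
    fun hqr => hmeet (.inr (.inr (.inl ⟨t, ht, hqr⟩)))⟩

end Meetings

section OneRound

variable {n : ℕ}

lemma intCast_zmod_ne_zero_of_pos_of_lt {a : ℤ} (h0 : 0 < a) (hn : a < n) : (a : ZMod n) ≠ 0 := by
  rw [Ne, ZMod.intCast_zmod_eq_zero_iff_dvd]
  exact fun hdvd => (Int.le_of_dvd h0 hdvd).not_gt hn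

lemma exists_ringStep_eq_add_intCast (e : Option (ZMod n)) (δ : Bool) (p : ZMod n) :
    ∃ μ : ℤ, |μ| ≤ 1 ∧ ringStep n e δ p = p + μ := by
  unfold ringStep
  split_ifs
  exacts [⟨1, by simp⟩, ⟨0, by simp⟩, ⟨-1, by simp [sub_eq_add_neg]⟩, ⟨0, by simp⟩]

lemma exists_ringStep_approach {p r : ZMod n} (h : p ≠ r - 1) (e : Option (ZMod n)) :
    ∃ α γ : ℤ, α ≤ 1 ∧ γ ≤ 1 ∧ 1 ≤ α + γ ∧
      ringStep n e true p = p + α ∧ ringStep n e false r = r - γ := by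
  by_cases hp : e = some p
  · exact ⟨0, 1, by simp [ringStep, hp, h]⟩
  by_cases hr : e = some (r - 1)
  · exact ⟨1, 0, by simp [ringStep, hr, h.symm]⟩
  · exact ⟨1, 1, by simp [ringStep, hp, hr]⟩

lemma encounter_or_gap_pos {p q : ZMod n} {a α β : ℤ} (ha : 0 < a) (han : a < n)
    (hq : q = p + a) (hα : α ≤ 1) (hβ : -1 ≤ β) :
    Encounter p q (p + α) (q + β) ∨ 0 < a + β - α := by
  rcases lt_trichotomy (a + β - α) 0 with hneg | hzero | hpos
  · obtain ⟨rfl, rfl, rfl⟩ : a = 1 ∧ α = 1 ∧ β = -1 := by omega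
    have hne : p ≠ q := by
      simpa [hq] using intCast_zmod_ne_zero_of_pos_of_lt ha han
    exact .inl (.inr ⟨hq.symm, by simp [hq], hne⟩)
  · obtain rfl : α = a + β := by omega
    exact .inl (.inl (by rw [hq]; push_cast; ring))
  · exact .inr hpos

/-- The node `m` lies strictly inside an arc leading clockwise from `p` to `r` in at most `d`
steps. The two parts of the arc are recorded as integers so that they can be updated by signed
displacements; this determines the cyclic order only for `d < n`. -/
def Encloses (n : ℕ) (d : ℤ) (p m r : ZMod n) : Prop :=
  ∃ a b : ℤ, 0 < a ∧ 0 < b ∧ a + b ≤ d ∧ m = p + a ∧ r = m + b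

lemma Encloses.two_le {d : ℤ} {p m r : ZMod n} : Encloses n d p m r → 2 ≤ d := by
  rintro ⟨a, b, ha, hb, hd, -⟩
  omega

lemma Encloses.rotate {p m r : ZMod n} (h : Encloses n (n - 1) p m r) :
    Encloses n (n - 1) r p m := by
  obtain ⟨a, b, ha, hb, hd, rfl, rfl⟩ := h
  exact ⟨n - a - b, a, by omega, ha, by omega, by push_cast [ZMod.natCast_self]; ring, rfl⟩

lemma encloses_of_val_sub_lt [NeZero n] {p m r : ZMod n} (hm : m ≠ p)
    (hmr : (m - p).val < (r - p).val) : Encloses n (n - 1) p m r := by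
  have hpos : 0 < (m - p).val := ZMod.val_pos.2 (sub_ne_zero.2 hm)
  have hlt : (r - p).val < n := ZMod.val_lt _
  refine ⟨(m - p).val, (r - p).val - (m - p).val, by omega, by omega, by omega, ?_, ?_⟩ <;> simp

lemma encloses_or_encloses_swap [NeZero n] {p m r : ZMod n} (hpm : p ≠ m) (hpr : p ≠ r)
    (hmr : m ≠ r) : Encloses n (n - 1) p m r ∨ Encloses n (n - 1) p r m := by
  have hval : (m - p).val ≠ (r - p).val := by
    simpa [(ZMod.val_injective n).eq_iff] using hmr
  exact hval.lt_or_gt.imp (encloses_of_val_sub_lt hpm.symm) (encloses_of_val_sub_lt hpr.symm)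

lemma Encloses.encounter_or_encloses_ringStep {d : ℤ} {p m r : ZMod n}
    (h : Encloses n d p m r) (hd : d < n) (e : Option (ZMod n)) (δ : Bool) :
    Encounter p m (ringStep n e true p) (ringStep n e δ m) ∨
      Encounter m r (ringStep n e δ m) (ringStep n e false r) ∨
      Encloses n (d - 1) (ringStep n e true p) (ringStep n e δ m) (ringStep n e false r) := by
  obtain ⟨a, b, ha, hb, hab, hm, hr⟩ := h
  have distinct_edges : p ≠ r - 1 := by
    have hne := intCast_zmod_ne_zero_of_pos_of_lt (n := n) (a := a + b - 1) (by omega) (by omega)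
    contrapose hne
    push_cast
    linear_combination -hm - hr - hne
  obtain ⟨α, γ, hα, hγ, hαγ, hp', hr'⟩ := exists_ringStep_approach distinct_edges e
  obtain ⟨μ, hμ, hm'⟩ := exists_ringStep_eq_add_intCast e δ m
  rw [abs_le] at hμ
  rw [hp', hm', hr', sub_eq_add_neg r, ← Int.cast_neg]
  refine (encounter_or_gap_pos ha (by omega) hm hα hμ.1).imp_right fun gap_left => ?_
  refine (encounter_or_gap_pos hb (by omega) hr hμ.2 (by omega)).imp_right fun gap_right => ?_
  refine ⟨a + μ - α, b + -γ - μ, gap_left, gap_right, by omega, ?_, ?_⟩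
  · rw [hm]; push_cast; ring
  · rw [hr]; push_cast; ring

end OneRound

section ManyRounds

variable {n : ℕ} {e : ℕ → Option (ZMod n)} {d₁ d₂ d₃ : ℕ → Bool} {v₁ v₂ v₃ : ZMod n} {T : ℕ}

lemma Encloses.somePairMeets {d : ℤ} {ℓ : ℕ}
    (h : Encloses n d (ringPos n e d₁ v₁ T) (ringPos n e d₂ v₂ T) (ringPos n e d₃ v₃ T))
    (hdn : d < n) (hdℓ : d ≤ ℓ + 1)
    (h₁ : ∀ t ∈ Set.Ico T (T + ℓ), d₁ t = true) (h₃ : ∀ t ∈ Set.Ico T (T + ℓ), d₃ t = false) :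
    SomePairMeets n (T + ℓ) (ringPos n e d₁ v₁) (ringPos n e d₂ v₂) (ringPos n e d₃ v₃) := by
  induction ℓ generalizing T d with
  | zero => exact absurd h.two_le (by omega)
  | succ ℓ ih =>
    have hround := h.encounter_or_encloses_ringStep hdn (e T) (d₂ T)
    rw [← h₁ T (by simp), ← h₃ T (by simp)] at hround
    rcases hround with hmeet | hmeet | hnext
    · exact .inl (Encounter.meetsWithin hmeet (by omega))
    · exact .inr (.inr (Encounter.meetsWithin hmeet (by omega)))
    · have hsub : Set.Ico (T + 1) (T + 1 + ℓ) ⊆ Set.Ico T (T + (ℓ + 1)) :=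
        Set.Ico_subset_Ico (by omega) (by omega)
      have hlater := ih (T := T + 1) hnext (by omega) (by omega)
        (fun t ht => h₁ t (hsub ht)) (fun t ht => h₃ t (hsub ht))
      exact hlater.mono (by omega)

variable [NeZero n]

lemma somePairMeets_of_true_of_false {ε : Bool}
    (h₁ : ∀ t ∈ Set.Ico T (T + (n - 2)), d₁ t = true)
    (h₂ : ∀ t ∈ Set.Ico T (T + (n - 2)), d₂ t = false)
    (h₃ : ∀ t ∈ Set.Ico T (T + (n - 2)), d₃ t = ε) :
    SomePairMeets n (T + (n - 2))
      (ringPos n e d₁ v₁) (ringPos n e d₂ v₂) (ringPos n e d₃ v₃) := by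
  by_cases hne : ringPos n e d₁ v₁ T ≠ ringPos n e d₂ v₂ T ∧
      ringPos n e d₁ v₁ T ≠ ringPos n e d₃ v₃ T ∧ ringPos n e d₂ v₂ T ≠ ringPos n e d₃ v₃ T
  swap
  · exact somePairMeets_of_not_pairwise_ne (by omega) hne
  have hn : (n : ℤ) - 1 < n := by omega
  have hℓ : (n : ℤ) - 1 ≤ (n - 2 : ℕ) + 1 := by omega
  rcases encloses_or_encloses_swap hne.1 hne.2.1 hne.2.2 with h123 | h132
  · cases ε with
    | true => exact (h123.rotate.somePairMeets hn hℓ h₃ h₂).swap_left.swap_right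
    | false => exact h123.somePairMeets hn hℓ h₁ h₃
  · exact (h132.somePairMeets hn hℓ h₁ h₂).swap_right

lemma somePairMeets_of_opposite {δ ε : Bool}
    (h₁ : ∀ t ∈ Set.Ico T (T + (n - 2)), d₁ t = δ)
    (h₂ : ∀ t ∈ Set.Ico T (T + (n - 2)), d₂ t = !δ)
    (h₃ : ∀ t ∈ Set.Ico T (T + (n - 2)), d₃ t = ε) :
    SomePairMeets n (T + (n - 2))
      (ringPos n e d₁ v₁) (ringPos n e d₂ v₂) (ringPos n e d₃ v₃) := by
  cases δ with
  | true => exact somePairMeets_of_true_of_false h₁ h₂ h₃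
  | false => exact (somePairMeets_of_true_of_false h₂ h₁ h₃).swap_left

end ManyRounds

section Phases

lemma stage1Phase_eq_of_mem_Ico {t r : ℕ} (hr : r ∈ Set.Ico (2 ^ t - 1) (2 ^ (t + 1) - 1)) :
    stage1Phase r = t := by
  obtain ⟨hle, hlt⟩ := hr
  exact (Nat.log_eq_iff (.inr ⟨by omega, by omega⟩)).2 ⟨by omega, by omega⟩

lemma exists_mod_eq_and_lt_pow_le {b n k : ℕ} (hb : 1 < b) (hn : n ≠ 0) (i : Fin k) :
    ∃ t, t % k = i ∧ n < b ^ t ∧ b ^ t ≤ n * b ^ k := by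
  have hmem : (i : ℕ) ∈ (Finset.Ico (Nat.log b n + 1) (Nat.log b n + 1 + k)).image (· % k) := by
    simp [Nat.image_Ico_mod]
  obtain ⟨t, ht, hmod⟩ := Finset.mem_image.1 hmem
  obtain ⟨hlow, hhigh⟩ := Finset.mem_Ico.1 ht
  refine ⟨t, hmod, ?_, ?_⟩
  · calc n < b ^ (Nat.log b n + 1) := Nat.lt_pow_succ_log_self hb n
      _ ≤ b ^ t := Nat.pow_le_pow_right (by omega) hlow
  · calc b ^ t ≤ b ^ (Nat.log b n + k) := Nat.pow_le_pow_right (by omega) (by omega)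
      _ = b ^ Nat.log b n * b ^ k := pow_add _ _ _
      _ ≤ n * b ^ k := Nat.mul_le_mul_right _ (Nat.pow_log_le_self b hn)

lemma stage1Dir_eq_of_mod_eq {k : ℕ} (hk : 0 < k) (b : Fin k → Bool) (s : Bool) {r : ℕ} {i : Fin k}
    (h : stage1Phase r % k = i) : stage1Dir k hk b s r = !(xor s (b i)) := by
  simp only [stage1Dir, h, Fin.eta]

lemma stage1_somePairMeets_of_xor_ne {n : ℕ} [NeZero n] {k : ℕ} (hk : 0 < k)
    {b₁ b₂ : Fin k → Bool} (b₃ : Fin k → Bool) {s₁ s₂ : Bool} (s₃ : Bool) {i : Fin k}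
    (hi : xor s₁ (b₁ i) ≠ xor s₂ (b₂ i)) (v₁ v₂ v₃ : ZMod n) (e : ℕ → Option (ZMod n)) :
    SomePairMeets n (n + n * 2 ^ k) (ringPos n e (stage1Dir k hk b₁ s₁) v₁)
      (ringPos n e (stage1Dir k hk b₂ s₂) v₂) (ringPos n e (stage1Dir k hk b₃ s₃) v₃) := by
  obtain ⟨t, hmod, hlong, hearly⟩ := exists_mod_eq_and_lt_pow_le one_lt_two (NeZero.ne n) i
  have hdir (b : Fin k → Bool) (s : Bool) :
      ∀ r ∈ Set.Ico (2 ^ t - 1) (2 ^ t - 1 + (n - 2)), stage1Dir k hk b s r = !(xor s (b i)) := by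
    rintro r ⟨hle, hlt⟩
    have hphase : stage1Phase r = t := stage1Phase_eq_of_mem_Ico ⟨hle, by omega⟩
    exact stage1Dir_eq_of_mod_eq hk b s (hphase ▸ hmod)
  have hopposite : (!(xor s₂ (b₂ i))) = !!(xor s₁ (b₁ i)) := by
    rw [Bool.eq_not_of_ne hi.symm]
  exact (somePairMeets_of_opposite (hdir b₁ s₁) (hopposite ▸ hdir b₂ s₂) (hdir b₃ s₃)).mono
    (by omega)

lemma stage1_somePairMeets_of_same_chirality {n : ℕ} [NeZero n] {k : ℕ} (hk : 0 < k)
    {b₁ b₂ : Fin k → Bool} (b₃ : Fin k → Bool) (h12 : b₁ ≠ b₂) (s s₃ : Bool)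
    (v₁ v₂ v₃ : ZMod n) (e : ℕ → Option (ZMod n)) :
    SomePairMeets n (n + n * 2 ^ k) (ringPos n e (stage1Dir k hk b₁ s) v₁)
      (ringPos n e (stage1Dir k hk b₂ s) v₂) (ringPos n e (stage1Dir k hk b₃ s₃) v₃) := by
  obtain ⟨i, hi⟩ := Function.ne_iff.1 h12
  exact stage1_somePairMeets_of_xor_ne hk b₃ s₃ (i := i) (by simpa using hi) v₁ v₂ v₃ e

end Phases

/-- Lemma 4 (lem:lruntime): in Stage 1, where robot `j`'s direction in phase `i` is
determined by bit `i mod k` of its ID xor-ed with its chirality, for every adversary some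
two of the three robots (whose IDs are pairwise distinct) meet within `n + n·2^k`
rounds. -/
theorem stage1_two_meet (n : ℕ) (hn : 3 ≤ n) (k : ℕ) (hk : 0 < k)
    (b₁ b₂ b₃ : Fin k → Bool)
    (h12 : b₁ ≠ b₂) (h13 : b₁ ≠ b₃) (h23 : b₂ ≠ b₃)
    (s₁ s₂ s₃ : Bool) (v₁ v₂ v₃ : ZMod n)
    (e : ℕ → Option (ZMod n)) :
    meetsWithin n (n + n * 2 ^ k)
        (ringPos n e (stage1Dir k hk b₁ s₁) v₁)
        (ringPos n e (stage1Dir k hk b₂ s₂) v₂) ∨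
    meetsWithin n (n + n * 2 ^ k)
        (ringPos n e (stage1Dir k hk b₁ s₁) v₁)
        (ringPos n e (stage1Dir k hk b₃ s₃) v₃) ∨
    meetsWithin n (n + n * 2 ^ k)
        (ringPos n e (stage1Dir k hk b₂ s₂) v₂)
        (ringPos n e (stage1Dir k hk b₃ s₃) v₃) := by
  have : NeZero n := ⟨by omega⟩
  have pigeonhole : s₁ = s₂ ∨ s₁ = s₃ ∨ s₂ = s₃ := by
    cases s₁ <;> cases s₂ <;> cases s₃ <;> simp
  rcases pigeonhole with rfl | rfl | rfl
  · exact stage1_somePairMeets_of_same_chirality hk b₃ h12 s₁ s₃ v₁ v₂ v₃ e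
  · exact (stage1_somePairMeets_of_same_chirality hk b₂ h13 s₁ s₂ v₁ v₃ v₂ e).swap_right
  · exact (stage1_somePairMeets_of_same_chirality hk b₁ h23 s₂ s₁ v₂ v₃ v₁ e).swap_right.swap_left
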